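/- arXiv:0905.1587 — 2 statements merged into one kernel-verified Lean document; each statement's English description precedes it below -/
import Mathlib

section
/- Let k ≥ 2. Every resolution tree of an unsatisfiable weakly linear k-CNF formula has at least 2^{2^{k/2 − 1}} leaves. -/
abbrev Var := ℕ
abbrev Lit := Var × Bool
abbrev Clause := Finset Lit
abbrev CNF := Finset Clause

/-- A clause is valid if it does not contain a variable together with its negation. -/
def Clause.valid (C : Clause) : Prop := ∀ x : Var, ¬(((x, true) ∈ C) ∧ ((x, false) ∈ C))

/-- The set of variables of a clause. -/
def vbl (C : Clause) : Finset Var := C.image Prod.fst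

/-- A `k`-CNF formula: every clause is valid and has exactly `k` literals. -/
def IsKCNF (k : ℕ) (F : CNF) : Prop := ∀ C ∈ F, Clause.valid C ∧ C.card = k

/-- A CNF formula is linear if any two distinct clauses share at most one variable. -/
def LinearCNF (F : CNF) : Prop := ∀ C ∈ F, ∀ D ∈ F, C ≠ D → (vbl C ∩ vbl D).card ≤ 1

/-- A CNF formula is weakly linear if any two distinct clauses share at most one literal. -/
def WeaklyLinear (F : CNF) : Prop := ∀ C ∈ F, ∀ D ∈ F, C ≠ D → (C ∩ D).card ≤ 1

/-- An assignment satisfies a formula if every clause contains a true literal. -/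
def Satisfies (α : Var → Bool) (F : CNF) : Prop := ∀ C ∈ F, ∃ l ∈ C, α l.1 = l.2

def Unsat (F : CNF) : Prop := ¬ ∃ α, Satisfies α F
/-- Resolution trees: leaves carry a clause, internal nodes carry the resolved
literal and the resolvent clause. -/
inductive RTree where
  | leaf : Clause → RTree
  | node : Lit → Clause → RTree → RTree → RTree

/-- The clause labeling the root of the tree. -/
def RTree.clause : RTree → Clause
  | .leaf C => C
  | .node _ C _ _ => C

/-- `R` is the resolvent of `C` and `D`, resolving on the (unique) literal `u`
with `u ∈ C` and `¬u ∈ D`. -/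
def Resolvent (u : Lit) (C D R : Clause) : Prop :=
  u ∈ C ∧ (u.1, !u.2) ∈ D ∧
  (∀ v ∈ C, (v.1, !v.2) ∈ D → v = u) ∧
  R = C.erase u ∪ D.erase (u.1, !u.2)

/-- `t` is a resolution tree from clauses of `F`: leaves are labeled by clauses
of `F`, and each internal node is labeled by the resolvent of its children. -/
def IsResTree (F : CNF) : RTree → Prop
  | .leaf C => C ∈ F
  | .node u C t1 t2 => IsResTree F t1 ∧ IsResTree F t2 ∧
      Resolvent u (RTree.clause t1) (RTree.clause t2) C

def RTree.leafCount : RTree → ℕ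
  | .leaf _ => 1
  | .node _ _ t1 t2 => t1.leafCount + t2.leafCount

/-- The list of clauses labeling the leaves. -/
def RTree.leaves : RTree → List Clause
  | .leaf C => [C]
  | .node _ _ t1 t2 => t1.leaves ++ t2.leaves

def ngt (l : Lit) : Lit := (l.1, !l.2)

theorem ngt_ngt (l : Lit) : ngt (ngt l) = l := by simp [ngt]

theorem ngt_ne (l : Lit) : ngt l ≠ l := by
  intro h
  have := congrArg Prod.snd h
  simp [ngt] at this

def Alive (C A : Clause) : Prop := ∀ l ∈ C, ngt l ∉ A

open Classical in
/-- Weight of the clause `C` when the literals in `A` are falsified. -/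
noncomputable def wt (k : ℕ) (C A : Clause) : ℝ :=
  if 2 ≤ (C ∩ A).card ∧ Alive C A then 2 ^ (C ∩ A).card / 2 ^ k else 0

noncomputable def pot (k : ℕ) (F : CNF) (A : Clause) : ℝ := ∑ C ∈ F, wt k C A

noncomputable def ind (C A : Clause) (u : Lit) : ℝ :=
  if u ∈ C ∧ (C ∩ A).Nonempty then 1 else 0

theorem ind_nonneg (C A : Clause) (u : Lit) : 0 ≤ ind C A u := by
  unfold ind; split_ifs <;> norm_num

theorem wt_nonneg (k : ℕ) (C A : Clause) : 0 ≤ wt k C A := by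
  unfold wt; split_ifs <;> positivity

theorem Alive.mono {C A : Clause} {u : Lit} (h : Alive C (insert u A)) : Alive C A :=
  fun l hl hn => h l hl (Finset.mem_insert_of_mem hn)

theorem wt_dead (k : ℕ) (C A : Clause) (u : Lit) (h : ngt u ∈ C) : wt k C (insert u A) = 0 := by
  unfold wt
  rw [if_neg]
  rintro ⟨-, h2⟩
  exact h2 _ h (by rw [ngt_ngt]; exact Finset.mem_insert_self _ _)

theorem wt_notMem (k : ℕ) (C A : Clause) (u : Lit) (h : u ∉ C) :
    wt k C (insert u A) ≤ wt k C A := by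
  have e : C ∩ insert u A = C ∩ A := Finset.inter_insert_of_notMem h
  by_cases h1 : 2 ≤ (C ∩ insert u A).card ∧ Alive C (insert u A)
  · have h2 : 2 ≤ (C ∩ A).card ∧ Alive C A := ⟨e ▸ h1.1, h1.2.mono⟩
    unfold wt
    rw [if_pos h1, if_pos h2, e]
  · have := wt_nonneg k C A
    rw [wt, if_neg h1]; exact this

theorem wt_mem (k : ℕ) (C A : Clause) (u : Lit) (h : u ∈ C) (hA : u ∉ A) :
    wt k C (insert u A) ≤ 2 * wt k C A + 4 / 2 ^ k * ind C A u := by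
  have e : C ∩ insert u A = insert u (C ∩ A) := Finset.inter_insert_of_mem h
  have ec : (C ∩ insert u A).card = (C ∩ A).card + 1 := by
    rw [e, Finset.card_insert_of_notMem (by simp [hA])]
  have hn := wt_nonneg k C A
  have hi := ind_nonneg C A u
  have hp : (0:ℝ) < 4 / 2 ^ k := by positivity
  by_cases h1 : 2 ≤ (C ∩ insert u A).card ∧ Alive C (insert u A)
  · by_cases h3 : 2 ≤ (C ∩ A).card
    · have h2 : 2 ≤ (C ∩ A).card ∧ Alive C A := ⟨h3, h1.2.mono⟩
      have : wt k C (insert u A) = 2 * wt k C A := by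
        unfold wt
        rw [if_pos h1, if_pos h2, ec, pow_succ]; ring
      rw [this]
      have := mul_nonneg hp.le hi
      linarith
    · have h4 : (C ∩ A).card = 1 := by omega
      have h5 : ind C A u = 1 := by
        unfold ind
        rw [if_pos ⟨h, Finset.card_pos.mp (by omega)⟩]
      have : wt k C (insert u A) = 4 / 2 ^ k := by
        unfold wt
        rw [if_pos h1, ec, h4]; norm_num
      rw [this, h5]; linarith
  · rw [wt, if_neg h1]
    have := mul_nonneg hp.le hi
    linarith

theorem valid_ngt {C : Clause} (hC : Clause.valid C) (u : Lit) (h : u ∈ C) : ngt u ∉ C := by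
  intro h2
  obtain ⟨x, b⟩ := u
  cases b
  · exact hC x ⟨h2, h⟩
  · exact hC x ⟨h, h2⟩

theorem wt_step (k : ℕ) (C A : Clause) (hC : Clause.valid C) (u : Lit) (hA : u ∉ A)
    (hA' : ngt u ∉ A) :
    wt k C (insert u A) + wt k C (insert (ngt u) A) ≤
      2 * wt k C A + 4 / 2 ^ k * (ind C A u + ind C A (ngt u)) := by
  have hi := ind_nonneg C A u
  have hi' := ind_nonneg C A (ngt u)
  have hp : (0:ℝ) < 4 / 2 ^ k := by positivity
  have p1 := mul_nonneg hp.le hi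
  have p2 := mul_nonneg hp.le hi'
  rw [mul_add]
  by_cases h : u ∈ C
  · have a := wt_mem k C A u h hA
    have b := wt_dead k C A (ngt u) (by rw [ngt_ngt]; exact h)
    linarith
  · by_cases h' : ngt u ∈ C
    · have a := wt_mem k C A _ h' hA'
      have b := wt_dead k C A u h'
      linarith
    · have a := wt_notMem k C A _ h
      have b := wt_notMem k C A _ h'
      linarith

theorem sum_ind (F : CNF) (hw : WeaklyLinear F) (A : Clause) (u : Lit) (hA : u ∉ A) :
    ∑ C ∈ F, ind C A u ≤ A.card := by
  unfold ind
  rw [Finset.sum_boole]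
  norm_cast
  have hs : (F.filter fun C => u ∈ C ∧ (C ∩ A).Nonempty) ⊆
      A.biUnion fun a => F.filter fun C => a ∈ C ∧ u ∈ C := by
    intro C hC
    simp only [Finset.mem_filter] at hC
    obtain ⟨hF, hu, a, ha⟩ := hC
    simp only [Finset.mem_inter] at ha
    simp only [Finset.mem_biUnion, Finset.mem_filter]
    exact ⟨a, ha.2, hF, ha.1, hu⟩
  refine (Finset.card_le_card hs).trans ?_
  have := Finset.card_biUnion_le_card_mul A (fun a => F.filter fun C => a ∈ C ∧ u ∈ C) 1 ?_
  · simpa using this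
  intro a ha
  rw [Finset.card_le_one]
  intro C hC D hD
  simp only [Finset.mem_filter] at hC hD
  by_contra hne
  have h1 := hw C hC.1 D hD.1 hne
  rw [Finset.card_le_one] at h1
  have := h1 a (by simp [hC.2.1, hD.2.1]) u (by simp [hC.2.2, hD.2.2])
  exact hA (this ▸ ha)

theorem pot_step (k : ℕ) (F : CNF) (hF : IsKCNF k F) (hw : WeaklyLinear F) (A : Clause)
    (u : Lit) (hA : u ∉ A) (hA' : ngt u ∉ A) :
    pot k F (insert u A) + pot k F (insert (ngt u) A) ≤
      2 * pot k F A + 4 / 2 ^ k * (2 * A.card) := by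
  unfold pot
  have h1 := Finset.sum_le_sum fun C (hC : C ∈ F) => wt_step k C A (hF C hC).1 u hA hA'
  simp only [Finset.sum_add_distrib, ← Finset.mul_sum] at h1
  have h2 := sum_ind F hw A u hA
  have h3 := sum_ind F hw A _ hA'
  have hp : (0:ℝ) < 4 / 2 ^ k := by positivity
  have h4 := mul_le_mul_of_nonneg_left (add_le_add h2 h3) hp.le
  linarith

theorem wt_le_pot (k : ℕ) (F : CNF) (A C : Clause) (hC : C ∈ F) : wt k C A ≤ pot k F A :=
  Finset.single_le_sum (f := fun C => wt k C A) (fun D _ => wt_nonneg k D A) hC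

def Cons (A : Clause) : Prop := ∀ l ∈ A, ngt l ∉ A

theorem Cons.insert {A : Clause} (h : Cons A) (u : Lit) (hu' : ngt u ∉ A) :
    Cons (insert u A) := by
  intro l hl hn
  rw [Finset.mem_insert] at hl hn
  rcases hl with rfl | hl
  · rcases hn with hn | hn
    · exact ngt_ne _ hn
    · exact hu' hn
  · rcases hn with hn | hn
    · apply hu'; rw [← hn, ngt_ngt]; exact hl
    · exact h l hl hn

theorem pot_leaf (k : ℕ) (hk : 3 ≤ k) (F : CNF) (hF : IsKCNF k F) (A C : Clause) (hC : C ∈ F)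
    (hA : Cons A) (h : C ⊆ A) : 1 ≤ pot k F A := by
  refine le_trans ?_ (wt_le_pot k F A C hC)
  have e : C ∩ A = C := Finset.inter_eq_left.mpr h
  have hc := (hF C hC).2
  unfold wt
  rw [e, if_pos ⟨by omega, fun l hl => hA l (h hl)⟩, hc, div_self (by positivity)]

theorem pot_half (k : ℕ) (hk : 3 ≤ k) (F : CNF) (hF : IsKCNF k F) (A C : Clause) (hC : C ∈ F)
    (u : Lit) (hA : Cons (insert u A)) (h : C ⊆ insert u A) : 1 / 2 ≤ pot k F A := by
  refine le_trans ?_ (wt_le_pot k F A C hC)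
  have hc := (hF C hC).2
  have h1 : C.erase u ⊆ C ∩ A := by
    intro l hl
    rw [Finset.mem_erase] at hl
    have := h hl.2
    rw [Finset.mem_insert] at this
    exact Finset.mem_inter.mpr ⟨hl.2, this.resolve_left hl.1⟩
  have h2 := Finset.card_le_card h1
  have h3 := Finset.pred_card_le_card_erase (s := C) (a := u)
  have h4 : k ≤ (C ∩ A).card + 1 := by omega
  have h5 : Alive C A := fun l hl hn => hA l (h hl) (Finset.mem_insert_of_mem hn)
  unfold wt
  rw [if_pos ⟨by omega, h5⟩, div_le_div_iff₀ (by norm_num) (by positivity)]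
  have : (2:ℝ) ^ k ≤ 2 ^ ((C ∩ A).card + 1) := pow_le_pow_right₀ (by norm_num) h4
  rw [pow_succ] at this
  linarith

theorem leafCount_pos (t : RTree) : 1 ≤ t.leafCount := by
  induction t with
  | leaf C => simp [RTree.leafCount]
  | node u C t1 t2 h1 h2 => simp only [RTree.leafCount]; omega

theorem half_or_two (k : ℕ) (hk : 3 ≤ k) (F : CNF) (hF : IsKCNF k F) (A : Clause) (t : RTree)
    (ht : IsResTree F t) (u : Lit) (hA : Cons (insert u A)) (h : t.clause ⊆ insert u A) :
    1 / 2 ≤ pot k F A ∨ 2 ≤ t.leafCount := by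
  cases t with
  | leaf C => exact Or.inl (pot_half k hk F hF A C ht u hA h)
  | node v C t1 t2 =>
    right
    have := leafCount_pos t1
    have := leafCount_pos t2
    simp only [RTree.leafCount]; omega

theorem pot_nonneg (k : ℕ) (F : CNF) (A : Clause) : 0 ≤ pot k F A :=
  Finset.sum_nonneg fun C _ => wt_nonneg k C A

theorem main_bound (k : ℕ) (hk : 3 ≤ k) (F : CNF) (hF : IsKCNF k F) (hw : WeaklyLinear F)
    (t : RTree) : ∀ (n : ℕ) (A : Clause), IsResTree F t → Cons A → t.clause ⊆ A →
      (2:ℝ) ^ n * 4 * (1 - pot k F A - 4 / 2 ^ k * (n * A.card + n * (n - 1) / 2))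
        ≤ t.leafCount := by
  induction t with
  | leaf C =>
    intro n A ht hA h
    have h1 := pot_leaf k hk F hF A C ht hA h
    have h2 : (0:ℝ) ≤ n * (n - 1) := by
      rcases Nat.eq_zero_or_pos n with rfl | hn
      · simp
      · have : (1:ℝ) ≤ n := by exact_mod_cast hn
        exact mul_nonneg (by linarith) (by linarith)
    have h3 : (0:ℝ) ≤ 4 / 2 ^ k * (n * A.card + n * (n - 1) / 2) := by positivity
    refine le_trans (mul_nonpos_of_nonneg_of_nonpos (by positivity) (by linarith)) (by positivity)
  | node u R t1 t2 ih1 ih2 =>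
    intro n A ht hA h
    obtain ⟨ht1, ht2, -, -, -, hR⟩ := ht
    have hR' : R ⊆ A := h
    rw [hR] at hR'
    have hs1 : t1.clause ⊆ insert u A := by
      intro l hl
      by_cases e : l = u
      · simp [e]
      · exact Finset.mem_insert_of_mem (hR' (by simp [e, hl]))
    have hs2 : t2.clause ⊆ insert (ngt u) A := by
      intro l hl
      by_cases e : l = ngt u
      · simp [e]
      · exact Finset.mem_insert_of_mem (hR' (Finset.mem_union_right _
          (Finset.mem_erase.mpr ⟨e, hl⟩)))
    have hL : ((RTree.node u R t1 t2).leafCount : ℝ) = t1.leafCount + t2.leafCount := by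
      simp [RTree.leafCount]
    rw [hL]
    have q1 : (0:ℝ) ≤ t1.leafCount := by positivity
    have q2 : (0:ℝ) ≤ t2.leafCount := by positivity
    by_cases hu : u ∈ A
    · rw [Finset.insert_eq_of_mem hu] at hs1
      have := ih1 n A ht1 hA hs1
      linarith
    by_cases hu' : ngt u ∈ A
    · rw [Finset.insert_eq_of_mem hu'] at hs2
      have := ih2 n A ht2 hA hs2
      linarith
    have c1 := hA.insert u hu'
    have c2 := hA.insert (ngt u) (by rw [ngt_ngt]; exact hu)
    cases n with
    | zero =>
      have r1 : (1:ℝ) ≤ t1.leafCount := by exact_mod_cast leafCount_pos t1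
      have r2 : (1:ℝ) ≤ t2.leafCount := by exact_mod_cast leafCount_pos t2
      have p0 := pot_nonneg k F A
      norm_num
      rcases half_or_two k hk F hF A t1 ht1 u c1 hs1 with h1 | h1
      · linarith
      rcases half_or_two k hk F hF A t2 ht2 _ c2 hs2 with h2 | h2
      · linarith
      have h1' : (2:ℝ) ≤ t1.leafCount := by exact_mod_cast h1
      have h2' : (2:ℝ) ≤ t2.leafCount := by exact_mod_cast h2
      linarith
    | succ n =>
      have i1 := ih1 n _ ht1 c1 hs1
      have i2 := ih2 n _ ht2 c2 hs2
      rw [Finset.card_insert_of_notMem hu] at i1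
      rw [Finset.card_insert_of_notMem hu'] at i2
      have ps := pot_step k F hF hw A u hu hu'
      have pp : (0:ℝ) ≤ 2 ^ n * 4 := by positivity
      have ps' := mul_le_mul_of_nonneg_left ps pp
      refine le_trans ?_ (add_le_add i1 i2)
      push_cast
      rw [pow_succ]
      generalize (4:ℝ) / 2 ^ k = ε at *
      generalize (2:ℝ) ^ n = N at *
      nlinarith [ps']

theorem stmt11 (k : ℕ) (hk : 2 ≤ k) (F : CNF) (hF : IsKCNF k F)
    (hw : WeaklyLinear F) (hunsat : Unsat F)
    (t : RTree) (ht : IsResTree F t) (hroot : t.clause = ∅) :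
    (2 : ℝ) ^ ((2 : ℝ) ^ ((k : ℝ) / 2 - 1)) ≤ (t.leafCount : ℝ) := by
  rcases Nat.eq_or_lt_of_le hk with rfl | hk3
  · cases t with
    | leaf C =>
      have h1 := (hF C ht).2
      have h2 : C = ∅ := hroot
      rw [h2] at h1
      simp at h1
    | node u R t1 t2 =>
      have h1 := leafCount_pos t1
      have h2 := leafCount_pos t2
      have h3 : 2 ≤ (RTree.node u R t1 t2).leafCount := by
        simp only [RTree.leafCount]; omega
      norm_num
      exact h3
  · set s : ℝ := (2 : ℝ) ^ ((k : ℝ) / 2 - 1) with hs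
    have hspos : 0 < s := by positivity
    have hss : s * s = 2 ^ k / 4 := by
      rw [hs, ← Real.rpow_add (by norm_num),
        show (k:ℝ) / 2 - 1 + (k / 2 - 1) = k - (2:ℕ) by push_cast; ring,
        Real.rpow_sub (by norm_num), Real.rpow_natCast, Real.rpow_natCast]
      norm_num
    obtain ⟨n, hn⟩ : ∃ n, ⌈s⌉₊ = n + 1 :=
      ⟨⌈s⌉₊ - 1, by have := Nat.ceil_pos.mpr hspos; omega⟩
    have hle : s ≤ n + 1 := by
      have := Nat.le_ceil s
      rw [hn] at this
      exact_mod_cast this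
    have hlt : (n:ℝ) < s := by
      apply Nat.lt_ceil.mp
      omega
    have hm := main_bound k hk3 F hF hw t n ∅ ht (by intro l hl; simp at hl) (by rw [hroot])
    have hp0 : pot k F ∅ = 0 := by
      unfold pot wt
      simp
    rw [hp0] at hm
    have e : (4:ℝ) / 2 ^ k = 1 / (s * s) := by
      rw [hss]; field_simp
    rw [e] at hm
    have hb : 1 / (s * s) * (n * ((∅ : Clause).card : ℝ) + n * ((n:ℝ) - 1) / 2) ≤ 1 / 2 := by
      rw [Finset.card_empty, one_div_mul_eq_div, div_le_iff₀ (by positivity)]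
      have : (0:ℝ) ≤ n := by positivity
      push_cast
      nlinarith
    have hpow : (2:ℝ) ^ s ≤ 2 ^ (n + 1) := by
      rw [← Real.rpow_natCast]
      apply Real.rpow_le_rpow_of_exponent_le (by norm_num)
      push_cast
      exact hle
    refine hpow.trans (le_trans ?_ hm)
    rw [pow_succ]
    have hN : (0:ℝ) < 2 ^ n := by positivity
    nlinarith
end

section
/- Every strictly treelike weakly linear k-CNF formula has at least 2^{ν_1 θ_1} clauses, where the parameters are defined for a fixed 1 ≤ ℓ ≤ k by θ_ℓ = ⌊(k−ℓ+1)/2⌋ − 1, ν_ℓ = 1, and inductively θ_i = ⌊2^{ν_{i+1}θ_{i+1}−2}/θ_{i+1}⌋ − 1 and ν_i = ((ν_{i+1}θ_{i+1}−1)/θ_i)·⌊θ_i/θ_{i+1}⌋ for 1 ≤ i < ℓ. -/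
/-- The parameters `(θ_i, ν_i)` of the tower bound, indexed by the distance
`j = ℓ - i` from `ℓ`: `par k ℓ j = (θ_{ℓ-j}, ν_{ℓ-j})`, with
`θ_ℓ = ⌊(k-ℓ+1)/2⌋ - 1`, `ν_ℓ = 1`,
`θ_i = ⌊2^{ν_{i+1}θ_{i+1}-2}/θ_{i+1}⌋ - 1` and
`ν_i = ((ν_{i+1}θ_{i+1}-1)/θ_i)·⌊θ_i/θ_{i+1}⌋`. -/
noncomputable def par (k l : ℕ) : ℕ → ℕ × ℝ
  | 0 => ((k - l + 1) / 2 - 1, 1)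
  | j + 1 =>
      let p := par k l j
      let t' := Nat.floor ((2 : ℝ) ^ (p.2 * (p.1 : ℝ) - 2) / (p.1 : ℝ)) - 1
      (t', (p.2 * (p.1 : ℝ) - 1) / (t' : ℝ) * ((t' / p.1 : ℕ) : ℝ))

/-- A node of the resolution tree: the set of literals on the path to it, and the subtree. -/
abbrev NodeT := Finset Lit × RTree

def NodeT.ok (F : CNF) (v : NodeT) : Prop := IsResTree F v.2 ∧ v.2.clause ⊆ v.1

/-- `fr` is a list of pairwise incomparable descendants of `v` at distance at most `d`. -/
def Front (F : CNF) (v : NodeT) (d : ℕ) (fr : List NodeT) : Prop :=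
  (fr.flatMap (fun w => w.2.leaves)).Sublist v.2.leaves ∧
  ∀ w ∈ fr, NodeT.ok F w ∧ v.1 ⊆ w.1 ∧ (w.1 \ v.1).card ≤ d

theorem leaves_ne_nil (t : RTree) : t.leaves ≠ [] := by
  induction t with
  | leaf C => simp [RTree.leaves]
  | node u C t1 t2 h1 h2 => simp [RTree.leaves, h1]

theorem leaves_mem {F : CNF} (t : RTree) (h : IsResTree F t) : ∀ D ∈ t.leaves, D ∈ F := by
  induction t with
  | leaf C => simpa [RTree.leaves, IsResTree] using h
  | node u C t1 t2 h1 h2 =>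
    intro D hD
    simp only [RTree.leaves, List.mem_append] at hD
    rcases hD with hD | hD
    · exact h1 h.1 D hD
    · exact h2 h.2.1 D hD

theorem sdiff_insert_card (D L : Finset Lit) (u : Lit) (n : ℕ) (h : n + 1 ≤ (D \ L).card) :
    n ≤ (D \ insert u L).card := by
  have h2 : D \ insert u L = (D \ L).erase u := by
    ext x; simp only [Finset.mem_sdiff, Finset.mem_insert, Finset.mem_erase]; tauto
  rw [h2]
  have := Finset.pred_card_le_card_erase (s := D \ L) (a := u)
  omega

theorem sdiff_trans_card (A B C : Finset Lit) (h : A ⊆ B) (h' : B ⊆ C) (n m : ℕ)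
    (h1 : (B \ A).card ≤ n) (h2 : (C \ B).card ≤ m) : (C \ A).card ≤ n + m := by
  have : C \ A ⊆ (B \ A) ∪ (C \ B) := by
    intro x; simp only [Finset.mem_sdiff, Finset.mem_union]; tauto
  have := Finset.card_le_card this
  have := Finset.card_union_le (B \ A) (C \ B)
  omega

/-- Replace each node in a front by a front of descendants. -/
theorem flatMap_sublist (f : NodeT → List NodeT) (fr : List NodeT)
    (h : ∀ w ∈ fr, ((f w).flatMap (fun w => w.2.leaves)).Sublist w.2.leaves) :
    ((fr.flatMap f).flatMap (fun w => w.2.leaves)).Sublist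
      (fr.flatMap (fun w => w.2.leaves)) := by
  induction fr with
  | nil => simp
  | cons a l ih =>
    simp only [List.flatMap_cons, List.flatMap_append]
    exact List.Sublist.append (h a (by simp)) (ih (fun w hw => h w (by simp [hw])))

theorem flatMap_length (f : NodeT → List NodeT) (fr : List NodeT) (c : ℝ)
    (h : ∀ w ∈ fr, c ≤ (f w).length) :
    (fr.length : ℝ) * c ≤ (fr.flatMap f).length := by
  induction fr with
  | nil => simp
  | cons a l ih =>
    have h1 := h a (by simp)
    have h2 := ih (fun w hw => h w (by simp [hw]))
    simp only [List.flatMap_cons, List.length_append, List.length_cons]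
    push_cast
    linarith

theorem Front.bind {F : CNF} {v : NodeT} {d e : ℕ} {fr : List NodeT} (hfr : Front F v d fr)
    (f : NodeT → List NodeT) (h : ∀ w ∈ fr, Front F w e (f w)) :
    Front F v (d + e) (fr.flatMap f) := by
  refine ⟨(flatMap_sublist f fr (fun w hw => (h w hw).1)).trans hfr.1, ?_⟩
  intro x hx
  obtain ⟨w, hw, hx⟩ := List.mem_flatMap.1 hx
  obtain ⟨a1, a2, a3⟩ := hfr.2 w hw
  obtain ⟨b1, b2, b3⟩ := (h w hw).2 x hx
  exact ⟨b1, a2.trans b2, sdiff_trans_card _ _ _ a2 b2 _ _ a3 b3⟩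

theorem base_front {F : CNF} (n : ℕ) : ∀ v : NodeT, NodeT.ok F v →
    (∀ D ∈ v.2.leaves, n ≤ (D \ v.1).card) →
    ∃ fr, Front F v n fr ∧ fr.length = 2 ^ n := by
  induction n with
  | zero =>
    intro v hv _
    exact ⟨[v], ⟨by simp, by simp [hv]⟩, by simp⟩
  | succ n ih =>
    rintro ⟨L, s⟩ hv hD
    cases s with
    | leaf C =>
      have h1 := hD C (by simp [RTree.leaves])
      have h2 : C \ L = ∅ := Finset.sdiff_eq_empty_iff_subset.2 hv.2
      simp [h2] at h1
    | node u C t1 t2 =>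
      obtain ⟨⟨r1, r2, hu, hu', -, hC⟩, hsub⟩ := hv
      simp only [RTree.clause] at hsub
      subst hC
      have ok1 : NodeT.ok F (insert u L, t1) := by
        refine ⟨r1, fun x hx => ?_⟩
        by_cases hxu : x = u
        · simp [hxu]
        · exact Finset.mem_insert_of_mem (hsub (by simp [hxu, hx]))
      have ok2 : NodeT.ok F (insert (u.1, !u.2) L, t2) := by
        refine ⟨r2, fun x hx => ?_⟩
        by_cases hxu : x = (u.1, !u.2)
        · simp [hxu]
        · exact Finset.mem_insert_of_mem
            (hsub (Finset.mem_union_right _ (Finset.mem_erase.2 ⟨hxu, hx⟩)))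
      obtain ⟨f1, hf1, l1⟩ := ih (insert u L, t1) ok1 (fun D hDD =>
        sdiff_insert_card _ _ _ _ (hD D (by simp [RTree.leaves]; exact Or.inl hDD)))
      obtain ⟨f2, hf2, l2⟩ := ih (insert (u.1, !u.2) L, t2) ok2 (fun D hDD =>
        sdiff_insert_card _ _ _ _ (hD D (by simp [RTree.leaves]; exact Or.inr hDD)))
      have key : ∀ (y : Lit), ((insert y L) \ L).card ≤ 1 := by
        intro y
        have : (insert y L) \ L ⊆ {y} := by
          intro x; simp only [Finset.mem_sdiff, Finset.mem_insert, Finset.mem_singleton]; tauto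
        simpa using Finset.card_le_card this
      refine ⟨f1 ++ f2, ⟨?_, ?_⟩, by simp [l1, l2, pow_succ]; ring⟩
      · simp only [List.flatMap_append, RTree.leaves]
        exact List.Sublist.append hf1.1 hf2.1
      · intro w hw
        rcases List.mem_append.1 hw with hw | hw
        · obtain ⟨a, b, c⟩ := hf1.2 w hw
          refine ⟨a, (Finset.subset_insert _ _).trans b, ?_⟩
          have := sdiff_trans_card _ _ _ (Finset.subset_insert u L) b _ _ (key u) c
          simp only; omega
        · obtain ⟨a, b, c⟩ := hf2.2 w hw
          refine ⟨a, (Finset.subset_insert _ _).trans b, ?_⟩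
          have := sdiff_trans_card _ _ _ (Finset.subset_insert (u.1, !u.2) L) b _ _ (key _) c
          simp only; omega

/-- Removing from a front all nodes that have a leaf satisfying `p` below them. -/
theorem kill_count (p : Clause → Bool) (fr : List NodeT) :
    fr.length ≤ (fr.filter (fun w => !(w.2.leaves.any p))).length
      + (fr.flatMap (fun w => w.2.leaves)).countP p := by
  induction fr with
  | nil => simp
  | cons a l ih =>
    simp only [List.flatMap_cons, List.countP_append, List.filter_cons, List.length_cons]
    by_cases h : a.2.leaves.any p = true
    · have : 0 < a.2.leaves.countP p := by
        rw [List.countP_pos_iff]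
        simpa using h
      simp only [h, Bool.not_true, Bool.false_eq_true, if_false]
      omega
    · simp only [Bool.not_eq_true] at h
      simp only [h, Bool.not_false, if_true, List.length_cons]
      omega

theorem filter_flatMap_sublist (q : NodeT → Bool) (fr : List NodeT) :
    ((fr.filter q).flatMap (fun w => w.2.leaves)).Sublist
      (fr.flatMap (fun w => w.2.leaves)) := by
  induction fr with
  | nil => simp
  | cons a l ih =>
    simp only [List.filter_cons, List.flatMap_cons]
    split
    · simp only [List.flatMap_cons]; exact List.Sublist.append_left ih _
    · exact ih.trans (List.sublist_append_right _ _)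

/-- Weak linearity: clauses containing a pair of distinct literals from `Q × R` are few. -/
theorem pair_count {F : CNF} (hw : WeaklyLinear F) (ls : List Clause) (hls : ls.Nodup)
    (hF : ∀ D ∈ ls, D ∈ F) (p : Clause → Bool) (Q R : Finset Lit)
    (h : ∀ D ∈ ls, p D = true → ∃ y ∈ Q, ∃ x ∈ R, y ≠ x ∧ y ∈ D ∧ x ∈ D) :
    ls.countP p ≤ Q.card * R.card := by
  classical
  rw [List.countP_eq_length_filter, ← Finset.card_product,
    ← List.toFinset_card_of_nodup (hls.filter _)]
  have h' : ∀ D : Clause, ∃ z : Lit × Lit, D ∈ (ls.filter p).toFinset →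
      z ∈ Q ×ˢ R ∧ z.1 ≠ z.2 ∧ z.1 ∈ D ∧ z.2 ∈ D := by
    intro D
    by_cases hD : D ∈ (ls.filter p).toFinset
    · rw [List.mem_toFinset, List.mem_filter] at hD
      obtain ⟨y, hy, x, hx, h1, h2, h3⟩ := h D hD.1 hD.2
      exact ⟨(y, x), fun _ => ⟨Finset.mem_product.2 ⟨hy, hx⟩, h1, h2, h3⟩⟩
    · exact ⟨((0, true), (0, true)), fun h => absurd h hD⟩
  choose f hf using h'
  refine Finset.card_le_card_of_injOn f (fun D hD => (hf D hD).1) ?_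
  intro D hD D' hD' he
  by_contra hne
  have a := hf D hD
  have b := hf D' hD'
  rw [← he] at b
  have m1 := hF D (List.mem_filter.1 (List.mem_toFinset.1 hD)).1
  have m2 := hF D' (List.mem_filter.1 (List.mem_toFinset.1 hD')).1
  have hc := hw D m1 D' m2 hne
  have : 1 < (D ∩ D').card := by
    rw [Finset.one_lt_card]
    exact ⟨(f D).1, by simp [a.2.2.1, b.2.2.1], (f D).2, by simp [a.2.2.2, b.2.2.2], a.2.1⟩
  omega

/-- `N_i = 2^{ν_i θ_i}`. -/
noncomputable def bigN (k l m : ℕ) : ℝ := (2 : ℝ) ^ ((par k l m).2 * ((par k l m).1 : ℝ))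

def hits (L : Finset Lit) (j : ℕ) (D : Clause) : Bool := decide (j ≤ (D ∩ L).card)

/-- The invariant of a node, called extendability. -/
def Hyp (k l m : ℕ) (v : NodeT) : Prop :=
  (∀ D ∈ v.2.leaves, (D ∩ v.1).card ≤ l - 1 + (par k l 0).1) ∧
  ∀ a, a < m → (∃ Q, Q ⊆ v.1 ∧ Q.card ≤ (par k l a).1 ∧
      ∀ D ∈ v.2.leaves, hits v.1 (l - a) D = true → ∃ x ∈ Q, x ∈ D) ∧
    ((v.2.leaves.countP (hits v.1 (l - a)) : ℕ) : ℝ) ≤ bigN k l a / 2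

theorem bigN_pos (k l m : ℕ) : 0 < bigN k l m := by unfold bigN; positivity

theorem bigN_succ (k l m : ℕ) (h : 0 < (par k l (m + 1)).1) :
    bigN k l (m + 1) = (bigN k l m / 2) ^ ((par k l (m + 1)).1 / (par k l m).1) := by
  have h0 : (0 : ℝ) < ((par k l (m + 1)).1 : ℝ) := by exact_mod_cast h
  have e : (par k l (m + 1)).2 = ((par k l m).2 * ((par k l m).1 : ℝ) - 1) /
      ((par k l (m + 1)).1 : ℝ) * (((par k l (m + 1)).1 / (par k l m).1 : ℕ) : ℝ) := rfl
  unfold bigN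
  rw [e]
  have : (2 : ℝ) ^ ((par k l m).2 * ((par k l m).1 : ℝ)) / 2
      = (2 : ℝ) ^ ((par k l m).2 * ((par k l m).1 : ℝ) - 1) := by
    rw [Real.rpow_sub (by norm_num), Real.rpow_one]
  rw [this, ← Real.rpow_natCast, ← Real.rpow_mul (by norm_num)]
  congr 1
  field_simp

theorem theta_bound (k l m : ℕ) (h : 0 < (par k l m).1) :
    ((par k l m).1 : ℝ) * (2 * ((par k l (m + 1)).1 : ℝ)) ≤ bigN k l m / 2 := by
  have h0 : (0 : ℝ) < ((par k l m).1 : ℝ) := by exact_mod_cast h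
  have e : (par k l (m + 1)).1 = Nat.floor ((2 : ℝ) ^ ((par k l m).2 * ((par k l m).1 : ℝ) - 2)
      / ((par k l m).1 : ℝ)) - 1 := rfl
  have e2 : (2 : ℝ) ^ ((par k l m).2 * ((par k l m).1 : ℝ) - 2) = bigN k l m / 4 := by
    unfold bigN
    rw [Real.rpow_sub (by norm_num)]; norm_num
  rw [e2] at e
  have h1 : (Nat.floor (bigN k l m / 4 / ((par k l m).1 : ℝ)) : ℝ)
      ≤ bigN k l m / 4 / ((par k l m).1 : ℝ) :=
    Nat.floor_le (by have := bigN_pos k l m; positivity)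
  have h2 : ((par k l (m + 1)).1 : ℝ) ≤ bigN k l m / 4 / ((par k l m).1 : ℝ) := by
    refine le_trans ?_ h1
    rw [e]
    exact_mod_cast Nat.sub_le _ _
  rw [le_div_iff₀ h0] at h2
  linarith

section main
variable {k l : ℕ} {F : CNF}

/-- Every extendable node has `N_i` descendants. -/
def StepA (k l : ℕ) (F : CNF) (m : ℕ) : Prop := ∀ v : NodeT, NodeT.ok F v → v.2.leaves.Nodup →
  Hyp k l (m + 1) v → ∃ fr, Front F v (par k l m).1 fr ∧ bigN k l m ≤ (fr.length : ℝ) ∧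
    ∀ w ∈ fr, (∀ D ∈ w.2.leaves, hits v.1 (l - m) D = false) → Hyp k l m w

def StepB (k l : ℕ) (F : CNF) (m : ℕ) : Prop := ∀ v : NodeT, NodeT.ok F v → v.2.leaves.Nodup →
  Hyp k l (m + 1) v → ∃ fr, Front F v (par k l m).1 fr ∧ bigN k l m / 2 ≤ (fr.length : ℝ) ∧
    ∀ w ∈ fr, (∀ D ∈ w.2.leaves, hits v.1 (l - m) D = false) ∧ Hyp k l m w

theorem stepB_of_stepA (m : ℕ) (hA : StepA k l F m) : StepB k l F m := by
  intro v hv hn hh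
  obtain ⟨fr, hfr, hlen, hw⟩ := hA v hv hn hh
  refine ⟨fr.filter (fun w => !(w.2.leaves.any (hits v.1 (l - m)))), ⟨?_, ?_⟩, ?_, ?_⟩
  · exact (filter_flatMap_sublist _ _).trans hfr.1
  · intro w hw
    exact hfr.2 w (List.mem_filter.1 hw).1
  · have h1 := kill_count (hits v.1 (l - m)) fr
    have h2 := hfr.1.countP_le (p := hits v.1 (l - m))
    have h3 := (hh.2 m (by omega)).2
    have h4 : (fr.length : ℝ) ≤ ((fr.filter
        (fun w => !(w.2.leaves.any (hits v.1 (l - m))))).length : ℝ) +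
        ((v.2.leaves.countP (hits v.1 (l - m)) : ℕ) : ℝ) := by
      exact_mod_cast h1.trans (Nat.add_le_add_left h2 _)
    linarith
  · intro w hw'
    obtain ⟨h1, h2⟩ := List.mem_filter.1 hw'
    have h3 : ∀ D ∈ w.2.leaves, hits v.1 (l - m) D = false := by
      simpa using h2
    exact ⟨h3, hw w h1 h3⟩

theorem stepA_zero (hlk : l ≤ k) (hl : 1 ≤ l) (hF : IsKCNF k F)
    (hpos : 0 < (par k l 0).1) : StepA k l F 0 := by
  intro v hv hn hh
  have e : (par k l 0).1 = (k - l + 1) / 2 - 1 := rfl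
  have e2 : (par k l 0).2 = 1 := rfl
  obtain ⟨fr, hfr, hlen⟩ := base_front (par k l 0).1 v hv (by
    intro D hD
    have h1 := hh.1 D hD
    have h2 := (hF D (leaves_mem _ hv.1 D hD)).2
    have h3 := Finset.card_sdiff_add_card_inter D v.1
    omega)
  refine ⟨fr, hfr, ?_, ?_⟩
  · unfold bigN
    rw [e2, one_mul, Real.rpow_natCast, hlen]
    push_cast
    exact le_refl _
  · intro w hw hD
    refine ⟨?_, fun a ha => absurd ha (by omega)⟩
    intro D hDw
    have h1 := hD D hDw
    simp only [hits, decide_eq_false_iff_not] at h1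
    obtain ⟨-, -, h3⟩ := hfr.2 w hw
    have h4 : D ∩ w.1 ⊆ (D ∩ v.1) ∪ (w.1 \ v.1) := by
      intro x; simp only [Finset.mem_inter, Finset.mem_union, Finset.mem_sdiff]; tauto
    have h5 := Finset.card_le_card h4
    have h6 := Finset.card_union_le (D ∩ v.1) (w.1 \ v.1)
    omega

theorem front_nodup {v : NodeT} {d : ℕ} {fr : List NodeT} (h : Front F v d fr)
    (hn : v.2.leaves.Nodup) (w : NodeT) (hw : w ∈ fr) : w.2.leaves.Nodup := by
  have h1 : (fr.flatMap (fun w => w.2.leaves)).Nodup := hn.sublist h.1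
  exact (List.nodup_flatMap.1 h1).1 w hw

theorem front_leaves {v : NodeT} {d : ℕ} {fr : List NodeT} (h : Front F v d fr)
    (w : NodeT) (hw : w ∈ fr) : ∀ D ∈ w.2.leaves, D ∈ v.2.leaves := by
  intro D hD
  exact h.1.subset (List.mem_flatMap.2 ⟨w, hw, hD⟩)

theorem hyp_new (hw : WeaklyLinear F) (m : ℕ) (hm : m + 1 < l) (hpos : 0 < (par k l m).1)
    (v0 v w : NodeT) (h0 : Hyp k l (m + 2) v0) (h0v : v0.1 ⊆ v.1) (hvw : v.1 ⊆ w.1)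
    (hd : (w.1 \ v.1).card ≤ (par k l m).1) (hd0 : (w.1 \ v0.1).card ≤ (par k l (m + 1)).1)
    (hok : NodeT.ok F w) (hn : w.2.leaves.Nodup) (hsub : ∀ D ∈ w.2.leaves, D ∈ v0.2.leaves)
    (havoid : ∀ D ∈ w.2.leaves, hits v.1 (l - m) D = false) (hH : Hyp k l m w) :
    Hyp k l (m + 1) w := by
  refine ⟨hH.1, fun a ha => ?_⟩
  rcases Nat.lt_succ_iff_lt_or_eq.1 ha with ha | rfl
  · exact hH.2 a ha
  have hit : ∀ D ∈ w.2.leaves, hits w.1 (l - a) D = true → ∃ x ∈ w.1 \ v.1, x ∈ D := by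
    intro D hD hh
    have h1 := havoid D hD
    simp only [hits, decide_eq_false_iff_not, decide_eq_true_eq] at h1 hh
    by_contra hcon
    push Not at hcon
    have : D ∩ w.1 ⊆ D ∩ v.1 := by
      intro x hx
      rw [Finset.mem_inter] at hx ⊢
      refine ⟨hx.1, ?_⟩
      by_contra hxv
      exact hcon x (Finset.mem_sdiff.2 ⟨hx.2, hxv⟩) hx.1
    have := Finset.card_le_card this
    omega
  refine ⟨⟨w.1 \ v.1, Finset.sdiff_subset, hd, hit⟩, ?_⟩
  obtain ⟨⟨Q0, hQ0, hQ0c, hQ0h⟩, -⟩ := h0.2 (a + 1) (by omega)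
  have hcount := pair_count hw w.2.leaves hn (leaves_mem _ hok.1) (hits w.1 (l - a))
    (w.1 \ v.1) (Q0 ∪ (w.1 \ v0.1)) (by
      intro D hD hh
      obtain ⟨y, hy, hyD⟩ := hit D hD hh
      rw [Finset.mem_sdiff] at hy
      refine ⟨y, Finset.mem_sdiff.2 hy, ?_⟩
      by_cases hc : hits v0.1 (l - (a + 1)) D = true
      · obtain ⟨x, hx, hxD⟩ := hQ0h D (hsub D hD) hc
        refine ⟨x, Finset.mem_union_left _ hx, ?_, hyD, hxD⟩
        rintro rfl
        exact hy.2 (h0v (hQ0 hx))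
      · simp only [hits, decide_eq_true_eq] at hc hh
        have h4 : D ∩ w.1 ⊆ (D ∩ v0.1) ∪ (D ∩ (w.1 \ v0.1)) := by
          intro x; simp only [Finset.mem_inter, Finset.mem_union, Finset.mem_sdiff]; tauto
        have h5 := Finset.card_le_card h4
        have h6 := Finset.card_union_le (D ∩ v0.1) (D ∩ (w.1 \ v0.1))
        have h7 : 1 < (D ∩ (w.1 \ v0.1)).card := by omega
        obtain ⟨x, hx, hxy⟩ := Finset.exists_mem_ne h7 y
        rw [Finset.mem_inter] at hx
        exact ⟨x, Finset.mem_union_right _ hx.2, hxy.symm, hyD, hx.1⟩)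
  have hR : (Q0 ∪ (w.1 \ v0.1)).card ≤ 2 * (par k l (a + 1)).1 := by
    have := Finset.card_union_le Q0 (w.1 \ v0.1)
    omega
  have hfin := hcount.trans (Nat.mul_le_mul hd hR)
  have hb := theta_bound k l a hpos
  refine le_trans ?_ hb
  exact_mod_cast hfin

theorem blocks (hw : WeaklyLinear F) (m : ℕ) (hm : m + 1 < l) (hpos : 0 < (par k l m).1)
    (hB : StepB k l F m) (v0 : NodeT) (hok : NodeT.ok F v0) (hn : v0.2.leaves.Nodup)
    (h0 : Hyp k l (m + 2) v0) (n : ℕ) (hnb : n * (par k l m).1 ≤ (par k l (m + 1)).1) :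
    ∃ fr, Front F v0 (n * (par k l m).1) fr ∧ (bigN k l m / 2) ^ n ≤ (fr.length : ℝ) ∧
      ∀ w ∈ fr, Hyp k l (m + 1) w := by
  induction n with
  | zero =>
    refine ⟨[v0], ⟨by simp, by simp [hok]⟩, by simp, ?_⟩
    intro w hw
    rw [List.mem_singleton] at hw
    subst hw
    exact ⟨h0.1, fun a ha => h0.2 a (by omega)⟩
  | succ n ih =>
    rw [Nat.succ_mul] at hnb ⊢
    obtain ⟨fr, hfr, hlen, hH⟩ := ih (by omega)
    have hex : ∀ w : NodeT, ∃ g, w ∈ fr → Front F w (par k l m).1 g ∧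
        bigN k l m / 2 ≤ (g.length : ℝ) ∧
        ∀ x ∈ g, (∀ D ∈ x.2.leaves, hits w.1 (l - m) D = false) ∧ Hyp k l m x := by
      intro w
      by_cases hwf : w ∈ fr
      · obtain ⟨g, hg⟩ := hB w (hfr.2 w hwf).1 (front_nodup hfr hn w hwf) (hH w hwf)
        exact ⟨g, fun _ => hg⟩
      · exact ⟨[], fun h => absurd h hwf⟩
    choose g hg using hex
    have hfr' : Front F v0 (n * (par k l m).1 + (par k l m).1) (fr.flatMap g) :=
      hfr.bind g (fun w hw => (hg w hw).1)
    refine ⟨fr.flatMap g, hfr', ?_, ?_⟩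
    · refine le_trans ?_ (flatMap_length g fr (bigN k l m / 2) (fun w hw => (hg w hw).2.1))
      rw [pow_succ]
      exact mul_le_mul_of_nonneg_right hlen (by have := bigN_pos k l m; positivity)
    · intro x hx
      obtain ⟨w, hwf, hxg⟩ := List.mem_flatMap.1 hx
      obtain ⟨a1, a2, a3⟩ := hg w hwf
      obtain ⟨b1, b2, b3⟩ := hfr'.2 x hx
      exact hyp_new hw m hm hpos v0 w x h0 (hfr.2 w hwf).2.1 (a1.2 x hxg).2.1
        (a1.2 x hxg).2.2 (b3.trans hnb) b1 (front_nodup hfr' hn x hx)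
        (front_leaves hfr' x hx) (a3 x hxg).1 (a3 x hxg).2

theorem stepA_all (hl : 1 ≤ l) (hlk : l ≤ k)
    (hpos : ∀ j, j < l → 0 < (par k l j).1 ∧ 0 < (par k l j).2)
    (hF : IsKCNF k F) (hw : WeaklyLinear F) (m : ℕ) (hm : m < l) : StepA k l F m := by
  induction m with
  | zero => exact stepA_zero hlk hl hF (hpos 0 hm).1
  | succ m ih =>
    intro v hv hn hh
    have hB := stepB_of_stepA m (ih (by omega))
    have hb := Nat.div_mul_le_self (par k l (m + 1)).1 (par k l m).1
    obtain ⟨fr, hfr, hlen, hH⟩ := blocks hw m hm (hpos m (by omega)).1 hB v hv hn hh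
      ((par k l (m + 1)).1 / (par k l m).1) hb
    refine ⟨fr, ⟨hfr.1, fun w hw => ?_⟩, ?_, fun w hw _ => hH w hw⟩
    · obtain ⟨a, b, c⟩ := hfr.2 w hw
      exact ⟨a, b, c.trans hb⟩
    · rw [bigN_succ k l m (hpos (m + 1) hm).1]
      exact hlen

end main

/-- Every strictly treelike weakly linear `k`-CNF formula has at least
`2^{ν_1 θ_1}` clauses. -/
theorem stmt17 (k l : ℕ) (hl : 1 ≤ l) (hlk : l ≤ k)
    (hpos : ∀ j, j < l → 0 < (par k l j).1 ∧ 0 < (par k l j).2)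
    (F : CNF) (hF : IsKCNF k F) (hw : WeaklyLinear F)
    (t : RTree) (ht : IsResTree F t) (hroot : t.clause = ∅)
    (hstrict : t.leaves.Nodup) :
    (2 : ℝ) ^ ((par k l (l - 1)).2 * ((par k l (l - 1)).1 : ℝ)) ≤ (F.card : ℝ) := by
  have hA := stepA_all hl hlk hpos hF hw (l - 1) (by omega)
  obtain ⟨fr, hfr, hlen, -⟩ := hA (∅, t) ⟨ht, by simp [hroot]⟩ hstrict (by
    refine ⟨by simp, fun a ha => ?_⟩
    have h0 : ∀ D : Clause, hits ∅ (l - a) D = false := by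
      intro D
      simp only [hits, Finset.inter_empty, Finset.card_empty, decide_eq_false_iff_not]
      omega
    refine ⟨⟨∅, by simp, by simp, ?_⟩, ?_⟩
    · intro D _ hD
      simp [h0 D] at hD
    · have : t.leaves.countP (hits ∅ (l - a)) = 0 := by
        rw [List.countP_eq_zero]
        intro D _
        simp [h0 D]
      simp only [this, Nat.cast_zero]
      have := bigN_pos k l a
      positivity)
  refine le_trans hlen ?_
  have h1 : fr.length ≤ (fr.flatMap (fun w => w.2.leaves)).length := by
    have := kill_count (fun _ => true) fr
    have h2 : fr.filter (fun w => !(w.2.leaves.any (fun _ => true))) = [] := by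
      rw [List.filter_eq_nil_iff]
      intro w _
      have := List.exists_mem_of_ne_nil _ (leaves_ne_nil w.2)
      simpa using this
    rw [h2] at this
    simpa using this
  have h3 : t.leaves.length ≤ F.card := by
    rw [← List.toFinset_card_of_nodup hstrict]
    exact Finset.card_le_card (fun D hD => leaves_mem t ht D (List.mem_toFinset.1 hD))
  exact_mod_cast h1.trans (hfr.1.length_le.trans h3)
end
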